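/- arXiv:1905.11390 — 2 statements merged into one kernel-verified Lean document; each statement's English description precedes it below -/
import Mathlib

section
/- Let n ≥ 1, let i ≥ 0 be an integer, and let a, b ∈ F_{2^n} be nonzero. Then the 2-polynomial f(X) = X^{2^i} + a·X^{2^{i+1}} + b·X^{2^{i+2}} ∈ F_{2^n}[X] is not an exceptional scattered polynomial of index 0. -/
/-- uniqueness -/
theorem aux_U (s : ℕ → ℕ) (hs : ∀ l, s l + 2 ≤ s (l+1)) (r : ℕ) :
    3 * ∑ l ∈ Finset.range r, 2 ^ s (l+1) < 4 * 2 ^ s r := by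
  induction r with
  | zero => simp
  | succ r ih =>
    rw [Finset.sum_range_succ]
    have : 2 ^ (s r + 2) ≤ 2 ^ s (r+1) := Nat.pow_le_pow_right (by norm_num) (hs r)
    rw [pow_add] at this
    omega

theorem aux_L (c : ℕ) (s e : ℕ → ℕ) (hs : ∀ l, s l + c ≤ s (l+1)) (he : ∀ l, e l ≤ c + 1) (r : ℕ) :
    ∑ l ∈ Finset.range r, 2 ^ (s l + e l) ≤ 2 * ∑ l ∈ Finset.range r, 2 ^ s (l+1) := by
  rw [Finset.mul_sum]
  refine Finset.sum_le_sum fun l _ => ?_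
  rw [← pow_succ']
  exact Nat.pow_le_pow_right (by norm_num) (by have := hs l; have := he l; omega)

theorem aux_uniq (c : ℕ) (hc : 2 ≤ c) (s e : ℕ → ℕ) (hs : ∀ l, s l + c ≤ s (l+1))
    (he : ∀ l, e l ≤ c + 1) (r : ℕ)
    (h : ∑ l ∈ Finset.range r, 2 ^ (s l + e l) = ∑ l ∈ Finset.range r, 2 ^ s (l+1)) :
    ∀ l < r, s l + e l = s (l+1) := by
  induction r with
  | zero => simp
  | succ r ih =>
    have hU := aux_U s (fun l => by have := hs l; omega) r
    have hL := aux_L c s e hs he r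
    rw [Finset.sum_range_succ, Finset.sum_range_succ] at h
    have h4 : 2 ^ (s r + 2) ≤ 2 ^ s (r+1) :=
      Nat.pow_le_pow_right (by norm_num) (by have := hs r; omega)
    rw [pow_add] at h4
    have key : s r + e r = s (r+1) := by
      rcases lt_trichotomy (s r + e r) (s (r+1)) with h1 | h1 | h1
      · have : 2 ^ (s r + e r + 1) ≤ 2 ^ s (r+1) := Nat.pow_le_pow_right (by norm_num) h1
        rw [pow_succ] at this
        omega
      · exact h1
      · have : 2 ^ (s (r+1) + 1) ≤ 2 ^ (s r + e r) := Nat.pow_le_pow_right (by norm_num) h1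
        rw [pow_succ] at this
        omega
    rw [key] at h
    intro l hl
    rcases Nat.lt_succ_iff_lt_or_eq.mp hl with h1 | h1
    · exact ih (by omega) l h1
    · rw [h1, key]

/-- the divisibility forces uniqueness -/
theorem aux_div (c : ℕ) (hc : 2 ≤ c) (s e : ℕ → ℕ) (hs : ∀ l, s l + c ≤ s (l+1))
    (he : ∀ l, e l ≤ c + 1) (he1 : ∀ l, 1 ≤ e l) (r : ℕ) (hs0 : s 0 = 0)
    (hr : s r + (c+1) = s (r+1))
    (h : 2 ^ s (r+1) - 1 ∣ ∑ l ∈ Finset.range (r+1), (2 ^ (e l) - 1) * 2 ^ s l) :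
    ∀ l < r + 1, s l + e l = s (l+1) := by
  have hN : ∑ l ∈ Finset.range (r+1), (2 ^ (e l) - 1) * 2 ^ s l
      + ∑ l ∈ Finset.range (r+1), 2 ^ s l = ∑ l ∈ Finset.range (r+1), 2 ^ (s l + e l) := by
    rw [← Finset.sum_add_distrib]
    refine Finset.sum_congr rfl fun l _ => ?_
    have : 1 ≤ 2 ^ e l := Nat.one_le_two_pow
    rw [← Nat.succ_mul, Nat.succ_eq_add_one, Nat.sub_add_cancel this, pow_add, mul_comm]
  have hS : ∑ l ∈ Finset.range (r+1), 2 ^ s l = ∑ l ∈ Finset.range r, 2 ^ s (l+1) + 1 := by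
    rw [Finset.sum_range_succ', hs0, pow_zero]
  have hpos : 0 < ∑ l ∈ Finset.range (r+1), (2 ^ (e l) - 1) * 2 ^ s l := by
    refine Finset.sum_pos (fun l _ => ?_) (by simp)
    have : 2 ^ 1 ≤ 2 ^ e l := Nat.pow_le_pow_right (by norm_num) (he1 l)
    exact Nat.mul_pos (by omega) (by positivity)
  have hU := aux_U s (fun l => by have := hs l; omega) r
  have hL := aux_L c s e hs he r
  have h4 : 2 ^ (s r + 3) ≤ 2 ^ s (r+1) := Nat.pow_le_pow_right (by norm_num) (by omega)
  rw [pow_add] at h4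
  have h5 : 2 ^ (s r + e r) ≤ 2 ^ s (r+1) :=
    Nat.pow_le_pow_right (by norm_num) (by have := he r; omega)
  have h6 : 1 ≤ 2 ^ s r := Nat.one_le_two_pow
  apply aux_uniq c hc s e hs he
  rw [Finset.sum_range_succ (fun l => 2 ^ (s l + e l))] at hN ⊢
  rw [Finset.sum_range_succ (fun l => 2 ^ s (l+1))]
  obtain ⟨d, hd⟩ := h
  have hd1 : d = 1 := by
    rcases d with _ | _ | d
    · omega
    · rfl
    · exfalso
      have : (2 ^ s (r+1) - 1) * 2 ≤ (2 ^ s (r+1) - 1) * (d + 1 + 1) := Nat.mul_le_mul_left _ (by omega)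
      omega
  subst hd1
  omega

/-- the power sum is a nonzero product -/
theorem aux_powsum {F : Type*} [Field F] [Fintype F] [DecidableEq F] [CharP F 2] (i : ℕ) (hi : 1 ≤ i)
    (w : Fin 3 → F) (s : ℕ → ℕ) (hs : ∀ l, s l + (i+1) ≤ s (l+1))
    (hs' : ∀ l, s (l+1) ≤ s l + (i+2)) (r : ℕ) (hs0 : s 0 = 0)
    (hr : s r + (i+2) = s (r+1)) (hw1 : w 1 ≠ 0) (hw2 : w 2 ≠ 0)
    (hF : Fintype.card F = 2 ^ s (r+1)) :
    ∑ x : Fˣ, (∑ e : Fin 3, w e * (x:F) ^ (2 ^ (i + e.val) - 1)) ^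
      (∑ l ∈ Finset.range (r+1), 2 ^ s l) ≠ 0 := by
  have hexp : ∀ x : Fˣ, (∑ e : Fin 3, w e * (x:F) ^ (2 ^ (i + e.val) - 1)) ^
      (∑ l ∈ Finset.range (r+1), 2 ^ s l) =
      ∑ φ : Fin (r+1) → Fin 3, (∏ l, (w (φ l)) ^ 2 ^ s l) *
        (x:F) ^ (∑ l : Fin (r+1), (2 ^ (i + (φ l).val) - 1) * 2 ^ s l) := by
    intro x
    rw [← Finset.prod_pow_eq_pow_sum, Finset.prod_range]
    simp_rw [sum_pow_char_pow 2]
    rw [Finset.prod_univ_sum]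
    rw [Fintype.piFinset_univ]
    refine Finset.sum_congr rfl fun φ _ => ?_
    rw [← Finset.prod_pow_eq_pow_sum, ← Finset.prod_mul_distrib]
    refine Finset.prod_congr rfl fun l _ => ?_
    rw [mul_pow, pow_mul]
  simp_rw [hexp]
  rw [Finset.sum_comm]
  simp_rw [← Finset.mul_sum, FiniteField.sum_pow_units, hF]
  set φ0 : Fin (r+1) → Fin 3 := fun l => if s l + (i+1) = s (l+1) then 1 else 2 with hφ0
  have h0 : ∀ l : Fin (r+1), s l + (i + (φ0 l).val) = s (l+1) := by
    intro l
    simp only [hφ0]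
    have := hs l
    have := hs' l
    split_ifs with h
    · simpa using h
    · simp only [Fin.val_two]; omega
  rw [Finset.sum_eq_single φ0]
  · rw [if_pos]
    · rw [mul_neg_one, neg_ne_zero, Finset.prod_ne_zero_iff]
      intro l _
      apply pow_ne_zero
      simp only [hφ0]
      split_ifs <;> assumption
    · have : ∑ l : Fin (r+1), (2 ^ (i + (φ0 l).val) - 1) * 2 ^ s l = 2 ^ s (r+1) - 1 := by
        have h1 : ∀ l : Fin (r+1), (2 ^ (i + (φ0 l).val) - 1) * 2 ^ s l
            = 2 ^ s (l+1) - 2 ^ s l := by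
          intro l
          rw [← h0 l, Nat.sub_mul, one_mul, pow_add _ (s l), mul_comm]
        simp_rw [h1]
        rw [← Finset.sum_range (fun l => 2 ^ s (l+1) - 2 ^ s l), Finset.sum_range_tsub (f := fun l => 2 ^ s l), hs0, pow_zero]
        refine monotone_nat_of_le_succ fun l => Nat.pow_le_pow_right (by norm_num) ?_
        have := hs l; omega
      rw [this]
  · intro φ _ hne
    rw [if_neg, mul_zero]
    intro hd
    apply hne
    set e : ℕ → ℕ := fun l => if h : l < r+1 then i + (φ ⟨l, h⟩).val else 1 with he
    have hev : ∀ l : Fin (r+1), e l = i + (φ l).val := by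
      intro l
      simp only [he]
      rw [dif_pos l.isLt]
    have := aux_div (i+1) (by omega) s e hs
      (fun l => by
        simp only [he]
        split_ifs with h
        · have := (φ ⟨l, h⟩).isLt; omega
        · omega)
      (fun l => by
        simp only [he]
        split_ifs with h
        · omega
        · omega) r hs0 (by omega) (by
          rw [Finset.sum_range]
          simp_rw [hev]
          exact hd)
    funext l
    have h1 := this l l.isLt
    rw [hev] at h1
    have h2 := h0 l
    apply Fin.ext
    omega
  · simp

theorem aux_injsum {F : Type*} [Field F] [Fintype F] [DecidableEq F] (g : Fˣ → F)
    (hg : Function.Injective g) (hq : 2 < Fintype.card F) (h1 : ∑ x, g x = 0) (S : ℕ) (hS : 0 < S)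
    (hS' : S < Fintype.card F - 1) : ∑ x, g x ^ S = 0 := by
  have hcard : (Finset.univ.image g)ᶜ.card = 1 := by
    rw [Finset.card_compl, Finset.card_image_of_injective _ hg, Finset.card_univ,
      Fintype.card_units]
    omega
  obtain ⟨c, hc⟩ := Finset.card_eq_one.mp hcard
  have hsum : ∀ T : ℕ, T < Fintype.card F - 1 → ∑ x, g x ^ T + c ^ T = 0 := by
    intro T hT
    have := Finset.sum_add_sum_compl (Finset.univ.image g) (fun y => y ^ T)
    rwa [hc, Finset.sum_singleton, Finset.sum_image (fun x _ y _ h => hg h),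
      FiniteField.sum_pow_lt_card_sub_one F T hT] at this
  have hc0 : c = 0 := by
    have := hsum 1 (by omega)
    simpa [h1] using this
  have := hsum S hS'
  rwa [hc0, zero_pow (by omega), add_zero] at this

theorem core1 {F : Type*} [Field F] [Fintype F] (i k : ℕ) (hi : 1 ≤ i)
    (hk : (i+1) * (i+1) + 1 ≤ k) (hF : Fintype.card F = 2 ^ k) (a b : F) (ha : a ≠ 0) (hb : b ≠ 0) :
    ∃ x y : F, x ≠ 0 ∧ y ≠ 0 ∧ x ≠ y ∧
      (x ^ 2 ^ i + a * x ^ 2 ^ (i + 1) + b * x ^ 2 ^ (i + 2)) * y =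
          (y ^ 2 ^ i + a * y ^ 2 ^ (i + 1) + b * y ^ 2 ^ (i + 2)) * x := by
  classical
  have : CharP F 2 := charP_of_card_eq_prime_pow hF
  by_contra hcon
  push Not at hcon
  -- the set of exponents
  obtain ⟨r, δ, hδ, hkr⟩ : ∃ r δ, δ ≤ r ∧ k = (r+1) * (i+1) + (r + 1 - δ) := by
    have h1 := Nat.div_add_mod (k-1) (i+1)
    have h2 := Nat.mod_lt (k-1) (show 0 < i+1 by omega)
    have h3 : i + 1 ≤ (k-1)/(i+1) := by
      rw [Nat.le_div_iff_mul_le (by omega)]; omega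
    obtain ⟨r, hr⟩ : ∃ r, (k-1)/(i+1) = r + 1 := ⟨(k-1)/(i+1) - 1, by omega⟩
    rw [hr, mul_comm] at h1
    rw [hr] at h3
    refine ⟨r, r - (k-1) % (i+1), by omega, ?_⟩
    have : 1 ≤ k := by omega
    omega
  set s : ℕ → ℕ := fun l => l * (i+1) + (l - δ) with hsdef
  have hstep : ∀ l, s (l+1) = s l + (i+1) + ((l+1-δ) - (l-δ)) := by
    intro l
    simp only [hsdef]
    rw [Nat.succ_mul]
    omega
  have hs : ∀ l, s l + (i+1) ≤ s (l+1) := fun l => by rw [hstep]; omega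
  have hs' : ∀ l, s (l+1) ≤ s l + (i+2) := fun l => by rw [hstep]; omega
  have hs0 : s 0 = 0 := by simp [hsdef]
  have hr : s r + (i+2) = s (r+1) := by rw [hstep]; omega
  have hk' : k = s (r+1) := hkr
  have hF' : Fintype.card F = 2 ^ s (r+1) := by rw [hF, hk']
  set w : Fin 3 → F := ![1, a, b] with hw
  set g : Fˣ → F := fun x => ∑ e : Fin 3, w e * (x:F) ^ (2 ^ (i + e.val) - 1) with hgdef
  have hgx : ∀ x : Fˣ, (x:F) ^ 2 ^ i + a * (x:F) ^ 2 ^ (i + 1) + b * (x:F) ^ 2 ^ (i + 2) = g x * x := by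
    intro x
    have hp : ∀ j : ℕ, (x:F) ^ 2 ^ j = (x:F) ^ (2 ^ j - 1) * x := by
      intro j
      rw [← pow_succ, Nat.sub_add_cancel Nat.one_le_two_pow]
    simp only [hgdef, Fin.sum_univ_three, hw]
    rw [hp i, hp (i+1), hp (i+2)]
    simp
    ring
  have hinj : Function.Injective g := by
    intro x y hxy
    by_contra hne
    apply hcon x y x.ne_zero y.ne_zero (fun h => hne (Units.ext h))
    rw [hgx, hgx, hxy]
    ring
  have hki : i + 3 ≤ k := by nlinarith
  have h8 : 2 ^ (i+3) ≤ 2 ^ k := Nat.pow_le_pow_right (by norm_num) hki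
  have h16 : 2 ^ 4 ≤ 2 ^ (i+3) := Nat.pow_le_pow_right (by norm_num) (by omega)
  have hg1 : ∑ x, g x = 0 := by
    simp only [hgdef]
    rw [Finset.sum_comm]
    refine Finset.sum_eq_zero fun e _ => ?_
    rw [← Finset.mul_sum, FiniteField.sum_pow_units, if_neg, mul_zero]
    intro hd
    have h2 : 2 ^ 1 ≤ 2 ^ (i + e.val) := Nat.pow_le_pow_right (by norm_num) (by omega)
    have h3 : 2 ^ (i + e.val) < 2 ^ (i+3) := Nat.pow_lt_pow_right (by norm_num) (by omega)
    have := Nat.le_of_dvd (by omega) hd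
    rw [hF] at this
    omega
  have hU := aux_U s (fun l => by have := hs l; omega) r
  have hS : ∑ l ∈ Finset.range (r+1), 2 ^ s l = ∑ l ∈ Finset.range r, 2 ^ s (l+1) + 1 := by
    rw [Finset.sum_range_succ', hs0, pow_zero]
  have h4 : 2 ^ (s r + 3) ≤ 2 ^ k := Nat.pow_le_pow_right (by norm_num) (by omega)
  rw [pow_add] at h4
  refine aux_powsum i hi w s hs hs' r hs0 hr ?_ ?_ hF' (aux_injsum g hinj ?_ hg1 _ ?_ ?_)
  · simpa [hw] using ha
  · simpa [hw] using hb
  · omega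
  · omega
  · omega

theorem core0 {F : Type*} [Field F] [Fintype F] (k : ℕ) 
    (hk : 3 ≤ k) (hF : Fintype.card F = 2 ^ k) (a b : F) (ha : a ≠ 0) (hb : b ≠ 0) :
    ∃ x y : F, x ≠ 0 ∧ y ≠ 0 ∧ x ≠ y ∧
      (x ^ 2 ^ 0 + a * x ^ 2 ^ (0 + 1) + b * x ^ 2 ^ (0 + 2)) * y =
          (y ^ 2 ^ 0 + a * y ^ 2 ^ (0 + 1) + b * y ^ 2 ^ (0 + 2)) * x := by
  classical
  have : CharP F 2 := charP_of_card_eq_prime_pow hF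
  have h8 : 2 ^ 3 ≤ 2 ^ k := Nat.pow_le_pow_right (by norm_num) hk
  obtain ⟨t, ht⟩ : ∃ t : F, t ^ 4 - t ≠ 0 := by
    by_contra! h
    have hne : (Polynomial.X ^ 4 - Polynomial.X : Polynomial F) ≠ 0 :=
      FiniteField.X_pow_card_sub_X_ne_zero F (by norm_num)
    have h1 := Polynomial.card_roots' (Polynomial.X ^ 4 - Polynomial.X : Polynomial F)
    rw [FiniteField.X_pow_card_sub_X_natDegree_eq F (by norm_num)] at h1
    have h2 : (Finset.univ : Finset F) ⊆ (Polynomial.X ^ 4 - Polynomial.X : Polynomial F).roots.toFinset := by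
      intro x _
      simp [hne, h x]
    have h3 := (Finset.card_le_card h2).trans (Multiset.toFinset_card_le _)
    rw [Finset.card_univ] at h3
    omega
  have h2 : (2:F) = 0 := CharTwo.two_eq_zero
  have hfac : t ^ 4 - t = t * (t - 1) * (t^2+t+1) := by ring
  rw [hfac] at ht
  have ht0 : t ≠ 0 := by rintro rfl; simp at ht
  have ht1 : t - 1 ≠ 0 := by intro h; simp [h] at ht
  have ht2 : t^2+t+1 ≠ 0 := by intro h; simp [h] at ht
  obtain ⟨z, hz⟩ := FiniteField.isSquare_of_char_two (ringChar.eq F 2 ▸ rfl) (a / (b * (t^2+t+1)))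
  have hz' : b * (t^2+t+1) * (z * z) = a := by rw [← hz]; exact mul_div_cancel₀ _ (mul_ne_zero hb ht2)
  have hz0 : z ≠ 0 := by
    rintro rfl
    apply ha
    rw [← hz']; ring
  refine ⟨z, t * z, hz0, mul_ne_zero ht0 hz0, ?_, ?_⟩
  · intro h
    apply ht1
    have : (t - 1) * z = 0 := by rw [sub_mul, ← h]; ring
    exact (mul_eq_zero.mp this).resolve_right hz0
  · rw [← hz']
    norm_num
    ring_nf
    grind

theorem aux_card (k : ℕ) (hk : k ≠ 0) (L : Subfield (AlgebraicClosure (ZMod 2)))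
    (hL : ∀ x, x ∈ L ↔ x ^ 2 ^ k = x) : ∃ _ : Fintype L, Fintype.card L = 2 ^ k := by
  have hsep : (Polynomial.X ^ 2 ^ k - Polynomial.X : Polynomial (ZMod 2)).Separable :=
    galois_poly_separable 2 (2 ^ k) (dvd_pow_self 2 hk)
  have hq : 1 < 2 ^ k := Nat.one_lt_two_pow hk
  have hne : (Polynomial.X ^ 2 ^ k - Polynomial.X : Polynomial (ZMod 2)) ≠ 0 :=
    FiniteField.X_pow_card_sub_X_ne_zero _ hq
  have h := Polynomial.card_rootSet_eq_natDegree (K := AlgebraicClosure (ZMod 2)) hsep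
    (IsAlgClosed.splits _)
  rw [FiniteField.X_pow_card_sub_X_natDegree_eq _ hq] at h
  have heq : ∀ x, x ∈ (Polynomial.X ^ 2 ^ k - Polynomial.X : Polynomial (ZMod 2)).rootSet
      (AlgebraicClosure (ZMod 2)) ↔ x ∈ L := by
    intro x
    rw [Polynomial.mem_rootSet, hL]
    simp [hne, sub_eq_zero]
  let E := Equiv.subtypeEquivRight heq
  exact ⟨Fintype.ofEquiv _ E, (Fintype.ofEquiv_card E).trans h⟩


/-- Let `n ≥ 1`, `i ≥ 0`, and let `a, b ≠ 0` lie in `F_{2^n}` (realized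
inside an algebraic closure `K` of `F_2` as `{c : c^{2^n} = c}`).  Then the
`2`-polynomial `f(X) = X^{2^i} + a·X^{2^{i+1}} + b·X^{2^{i+2}}` is not exceptional
scattered of index `0`: it is scattered of index `0` over `F_{2^{nm}}` for only finitely
many `m ≥ 1`. -/
theorem stmt_10 (n : ℕ) (hn : 1 ≤ n) (i : ℕ)
    (a b : AlgebraicClosure (ZMod 2)) (ha : a ≠ 0) (hb : b ≠ 0)
    (haF : a ^ 2 ^ n = a) (hbF : b ^ 2 ^ n = b) :
    {m : ℕ | 0 < m ∧ ∀ x y : AlgebraicClosure (ZMod 2),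
        x ≠ 0 → y ≠ 0 → x ^ 2 ^ (n * m) = x → y ^ 2 ^ (n * m) = y →
        (x ^ 2 ^ i + a * x ^ 2 ^ (i + 1) + b * x ^ 2 ^ (i + 2)) * y =
          (y ^ 2 ^ i + a * y ^ 2 ^ (i + 1) + b * y ^ 2 ^ (i + 2)) * x →
        (y / x) ^ 2 = y / x}.Finite := by
  refine (Set.finite_Iio ((i+2) * (i+2) + 5)).subset ?_
  rintro m ⟨hm, H⟩
  rw [Set.mem_Iio]
  by_contra! hlt
  have hk : (i+2) * (i+2) + 5 ≤ n * m := hlt.trans (Nat.le_mul_of_pos_left m hn)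
  have hfix : ∀ c : AlgebraicClosure (ZMod 2), c ^ 2 ^ n = c → c ^ 2 ^ (n * m) = c := by
    intro c hc
    rw [pow_mul]
    clear H hk hlt hm
    induction m with
    | zero => simp
    | succ m ih => rw [pow_succ, pow_mul, ih, hc]
  let L : Subfield (AlgebraicClosure (ZMod 2)) :=
    RingHom.eqLocusField (iterateFrobenius (AlgebraicClosure (ZMod 2)) 2 (n * m)) (RingHom.id _)
  have hL : ∀ x, x ∈ L ↔ x ^ 2 ^ (n * m) = x := fun x => Iff.rfl
  obtain ⟨_, hcard⟩ := aux_card (n * m) (by omega) L hL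
  let a' : L := ⟨a, (hL a).2 (hfix a haF)⟩
  let b' : L := ⟨b, (hL b).2 (hfix b hbF)⟩
  have ha' : a' ≠ 0 := fun h => ha (congrArg Subtype.val h)
  have hb' : b' ≠ 0 := fun h => hb (congrArg Subtype.val h)
  obtain ⟨x, y, hx, hy, hxy, he⟩ : ∃ x y : L, x ≠ 0 ∧ y ≠ 0 ∧ x ≠ y ∧
      (x ^ 2 ^ i + a' * x ^ 2 ^ (i + 1) + b' * x ^ 2 ^ (i + 2)) * y =
          (y ^ 2 ^ i + a' * y ^ 2 ^ (i + 1) + b' * y ^ 2 ^ (i + 2)) * x := by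
    rcases Nat.eq_zero_or_pos i with h0 | h0
    · subst h0
      exact core0 (n * m) (by omega) hcard a' b' ha' hb'
    · exact core1 i (n * m) h0 (by nlinarith) hcard a' b' ha' hb'
  have hx' : (x : AlgebraicClosure (ZMod 2)) ≠ 0 := fun h => hx (Subtype.ext h)
  have hy' : (y : AlgebraicClosure (ZMod 2)) ≠ 0 := fun h => hy (Subtype.ext h)
  have h1 := H x y hx' hy' ((hL _).1 x.2) ((hL _).1 y.2) (congrArg Subtype.val he)
  apply hxy
  apply Subtype.ext
  have h2 : (y : AlgebraicClosure (ZMod 2)) / x ≠ 0 := div_ne_zero hy' hx'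
  have h3 : (y : AlgebraicClosure (ZMod 2)) / x = 1 := by
    rw [sq] at h1
    exact mul_left_cancel₀ h2 (by rw [h1, mul_one])
  exact ((div_eq_one_iff_eq hx').1 h3).symm
end

section
/- Let K be a finite field with algebraic closure K̄, and let F ∈ K[X,Y] be a squarefree polynomial of total degree d ≥ 1. Suppose F has no absolutely irreducible factor defined over K, i.e., no irreducible factor g ∈ K[X,Y] that remains irreducible in K̄[X,Y]. Then there exist polynomials A, B ∈ K̄[X,Y] with F = A·B, such that A and B have no common irreducible factor, and deg(A)·deg(B) ≥ 2d²/9. -/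
open MvPolynomial in
theorem aux_totalDegree_map {K L : Type*} [Field K] [Field L] (f : K →+* L)
    (p : MvPolynomial (Fin 2) K) : (map f p).totalDegree = p.totalDegree := by
  unfold totalDegree
  rw [support_map_of_injective _ f.injective]

open MvPolynomial in
theorem aux_fixed {K L : Type*} [Field K] [Field L] [Algebra K L] [IsGalois K L]
    (R : MvPolynomial (Fin 2) L)
    (h : ∀ s : L ≃ₐ[K] L, map (s : L →+* L) R = R) :
    ∃ R0 : MvPolynomial (Fin 2) K, map (algebraMap K L) R0 = R := by
  have : R ∈ Set.range (map (σ := Fin 2) (algebraMap K L)) := by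
    rw [mem_range_map_iff_coeffs_subset]
    intro c hc
    obtain ⟨m, hm, rfl⟩ := mem_coeffs_iff.1 hc
    rw [InfiniteGalois.mem_range_algebraMap_iff_fixed]
    intro s
    have := congrArg (coeff m) (h s)
    rw [coeff_map] at this
    exact this
  exact this

open MvPolynomial in
theorem aux_map_map {K L : Type*} [Field K] [Field L] [Algebra K L]
    (s : L ≃ₐ[K] L) (a : MvPolynomial (Fin 2) K) :
    map (s : L →+* L) (map (algebraMap K L) a) = map (algebraMap K L) a := by
  rw [map_map]
  have : (s : L →+* L).comp (algebraMap K L) = algebraMap K L := by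
    apply RingHom.ext
    intro x
    exact s.commutes x
  rw [this]

open MvPolynomial in
theorem aux_dvd {K L : Type*} [Field K] [Field L] [Algebra K L] [IsGalois K L]
    (a b : MvPolynomial (Fin 2) K)
    (h : map (algebraMap K L) a ∣ map (algebraMap K L) b) : a ∣ b := by
  have hinj := map_injective (σ := Fin 2) (algebraMap K L) (algebraMap K L).injective
  obtain ⟨c, hc⟩ := h
  by_cases ha : a = 0
  · subst ha
    have : b = 0 := hinj (by simpa using hc)
    simp [this]
  have ha' : map (algebraMap K L) a ≠ 0 := fun h0 => ha (hinj (by simpa using h0))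
  obtain ⟨c0, rfl⟩ := aux_fixed (K := K) c (by
    intro s
    have h1 := congrArg (map (s : L →+* L)) hc
    rw [map_mul, aux_map_map, aux_map_map, hc] at h1
    exact (mul_left_cancel₀ ha' h1).symm)
  refine ⟨c0, hinj ?_⟩
  rw [hc, map_mul]

open MvPolynomial in
theorem aux_descend {K L : Type*} [Field K] [Field L] [Algebra K L] [IsGalois K L]
    (R : MvPolynomial (Fin 2) L) (hR : R ≠ 0)
    (h : ∀ s : L ≃ₐ[K] L, R ∣ map (s : L →+* L) R) :
    ∃ R0 : MvPolynomial (Fin 2) K, Associated (map (algebraMap K L) R0) R := by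
  obtain ⟨m, hm⟩ := ne_zero_iff.1 hR
  have hu : IsUnit (C (coeff m R)⁻¹ : MvPolynomial (Fin 2) L) :=
    (IsUnit.mk0 _ (inv_ne_zero hm)).map C
  obtain ⟨R0, h0⟩ := aux_fixed (K := K) (C (coeff m R)⁻¹ * R) (by
    intro s
    obtain ⟨c, hc⟩ := h s
    have hs0 : map (s : L →+* L) R ≠ 0 := fun h0 =>
      hR (map_injective _ (s : L →+* L).injective (by simpa using h0))
    have hc0 : c ≠ 0 := by
      rintro rfl
      exact hs0 (by simpa using hc)
    have hdeg := congrArg totalDegree hc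
    rw [aux_totalDegree_map, totalDegree_mul_of_isDomain hR hc0] at hdeg
    have hc1 := totalDegree_eq_zero_iff_eq_C.1 (show c.totalDegree = 0 by omega)
    set e := coeff 0 c with he
    rw [hc1] at hc
    have hcm := congrArg (coeff m) hc
    rw [coeff_map, mul_comm, coeff_C_mul] at hcm
    have he0 : e ≠ 0 := by
      intro h0
      rw [h0] at hc1
      exact hc0 (by simpa using hc1)
    rw [map_mul, map_C, hc, map_inv₀, hcm, mul_comm R, ← mul_assoc, ← C_mul]
    congr 2
    field_simp)
  refine ⟨R0, ?_⟩
  rw [h0]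
  exact associated_unit_mul_left _ _ hu

open MvPolynomial in
theorem aux_squarefree {K L : Type*} [Field K] [Field L] [Algebra K L] [IsGalois K L]
    (F : MvPolynomial (Fin 2) K) (hsf : Squarefree F) :
    Squarefree (map (algebraMap K L) F) := by
  have hinj := map_injective (σ := Fin 2) (algebraMap K L) (algebraMap K L).injective
  have hG : map (algebraMap K L) F ≠ 0 := fun h0 => hsf.ne_zero (hinj (by simpa using h0))
  obtain ⟨R, n, hR, hRG, hGR⟩ := exists_squarefree_dvd_pow_of_ne_zero hG
  have hdv : ∀ s : L ≃ₐ[K] L, R ∣ map (s : L →+* L) R := by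
    intro s
    refine hR.isRadical n _ (hRG.trans ?_)
    have := map_dvd (map (σ := Fin 2) (s : L →+* L)) hGR
    rwa [aux_map_map, map_pow] at this
  obtain ⟨R0, h0⟩ := aux_descend (K := K) R hR.ne_zero hdv
  have h1 : F ∣ R0 ^ n := by
    apply aux_dvd (L := L)
    rw [map_pow]
    exact hGR.trans ((h0.pow_pow).symm.dvd)
  have h2 : F ∣ R0 := hsf.isRadical n _ h1
  exact hR.squarefree_of_dvd ((map_dvd (map (algebraMap K L)) h2).trans h0.dvd)

open MvPolynomial in
theorem aux_half {K L : Type*} [Field K] [Field L] [Algebra K L] [IsGalois K L]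
    (F : MvPolynomial (Fin 2) K) (hF : F ≠ 0)
    (habs : ¬ ∃ g : MvPolynomial (Fin 2) K, Irreducible g ∧ g ∣ F ∧
        Irreducible (map (algebraMap K L) g))
    (h : MvPolynomial (Fin 2) L) (hi : Irreducible h) (hd : h ∣ map (algebraMap K L) F) :
    2 * h.totalDegree ≤ F.totalDegree := by
  have hinj := map_injective (σ := Fin 2) (algebraMap K L) (algebraMap K L).injective
  have hG : map (algebraMap K L) F ≠ 0 := fun h0 => hF (hinj (by simpa using h0))
  by_cases hall : ∀ s : L ≃ₐ[K] L, h ∣ map (s : L →+* L) h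
  · exfalso
    obtain ⟨g, hg⟩ := aux_descend (K := K) h hi.ne_zero hall
    have hgi : Irreducible (map (algebraMap K L) g) := hg.irreducible_iff.2 hi
    have hunit : ∀ a : MvPolynomial (Fin 2) K, IsUnit (map (algebraMap K L) a) → IsUnit a := by
      intro a ha
      refine isUnit_of_dvd_one (aux_dvd (L := L) a 1 ?_)
      rw [map_one]
      exact ha.dvd
    refine habs ⟨g, ⟨fun hu => hgi.not_isUnit (hu.map _), ?_⟩,
      aux_dvd (L := L) g F (hg.dvd.trans hd), hgi⟩
    intro a b hab
    have := hgi.isUnit_or_isUnit (a := map (algebraMap K L) a) (b := map (algebraMap K L) b)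
      (by rw [hab, map_mul])
    exact this.imp (hunit a) (hunit b)
  · push Not at hall
    obtain ⟨s, hs⟩ := hall
    have h2 : map (s : L →+* L) h ∣ map (algebraMap K L) F := by
      have := map_dvd (map (σ := Fin 2) (s : L →+* L)) hd
      rwa [aux_map_map] at this
    obtain ⟨c, hc⟩ := h2
    have hp := hi.prime
    have hdc : h ∣ c := (hp.dvd_or_dvd (hc ▸ hd)).resolve_left hs
    obtain ⟨e, rfl⟩ := hdc
    have hne := hG
    rw [hc] at hne
    have hs0 := left_ne_zero_of_mul hne
    have hr := right_ne_zero_of_mul hne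
    have := congrArg totalDegree hc
    rw [aux_totalDegree_map, totalDegree_mul_of_isDomain hs0 hr, aux_totalDegree_map,
      totalDegree_mul_of_isDomain hi.ne_zero (right_ne_zero_of_mul hr)] at this
    omega

open MvPolynomial in
theorem aux_comb {L : Type*} [Field L] (G : MvPolynomial (Fin 2) L) (hG : G ≠ 0)
    (hd : 1 ≤ G.totalDegree)
    (hh : ∀ h, Irreducible h → h ∣ G → 2 * h.totalDegree ≤ G.totalDegree) :
    ∀ n : ℕ, ∀ A, A ∣ G → A.totalDegree = n → G.totalDegree ≤ 3 * A.totalDegree →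
    ∃ A', A' ∣ G ∧ G.totalDegree ≤ 3 * A'.totalDegree ∧
      3 * A'.totalDegree ≤ 2 * G.totalDegree := by
  intro n
  induction n using Nat.strong_induction_on with
  | _ n ih =>
    intro A hA hn h3
    by_cases h2 : 3 * A.totalDegree ≤ 2 * G.totalDegree
    · exact ⟨A, hA, h3, h2⟩
    have hA0 : A ≠ 0 := ne_zero_of_dvd_ne_zero hG hA
    have hAu : ¬ IsUnit A := by
      intro hu
      have := (isUnit_iff_totalDegree_of_isReduced.1 hu).2
      omega
    obtain ⟨h, hi, hdv⟩ := WfDvdMonoid.exists_irreducible_factor hAu hA0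
    have hle := hh h hi (hdv.trans hA)
    by_cases h4 : G.totalDegree ≤ 3 * h.totalDegree
    · exact ⟨h, hdv.trans hA, h4, by omega⟩
    have hpos : h.totalDegree ≠ 0 := by
      intro h0
      have hC := totalDegree_eq_zero_iff_eq_C.1 h0
      apply hi.not_isUnit
      rw [hC]
      refine (IsUnit.mk0 _ ?_).map C
      intro h00
      rw [h00] at hC
      exact hi.ne_zero (by simpa using hC)
    obtain ⟨B, rfl⟩ := hdv
    have hB0 := right_ne_zero_of_mul hA0
    rw [totalDegree_mul_of_isDomain hi.ne_zero hB0] at *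
    exact ih B.totalDegree (by omega) B ((dvd_mul_left _ _).trans hA) rfl (by omega)

/-- Let `K` be a finite field with algebraic closure `K̄`, and let
`F ∈ K[X,Y]` be a squarefree polynomial of total degree `d ≥ 1` having no absolutely
irreducible factor defined over `K`.  Then over `K̄` one can write `F = A·B` where `A`
and `B` share no common irreducible factor and `deg(A)·deg(B) ≥ 2d²/9`, i.e.
`9·deg(A)·deg(B) ≥ 2d²`. -/
theorem stmt_13 (K : Type) [Field K] [Fintype K]
    (F : MvPolynomial (Fin 2) K) (hsf : Squarefree F)
    (hd : 1 ≤ F.totalDegree)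
    (habs : ¬ ∃ g : MvPolynomial (Fin 2) K, Irreducible g ∧ g ∣ F ∧
        Irreducible (MvPolynomial.map (algebraMap K (AlgebraicClosure K)) g)) :
    ∃ A B : MvPolynomial (Fin 2) (AlgebraicClosure K),
      MvPolynomial.map (algebraMap K (AlgebraicClosure K)) F = A * B ∧
      (∀ g : MvPolynomial (Fin 2) (AlgebraicClosure K),
        Irreducible g → g ∣ A → ¬ g ∣ B) ∧
      2 * F.totalDegree ^ 2 ≤ 9 * (A.totalDegree * B.totalDegree) := by
  haveI : IsGalois K (AlgebraicClosure K) := {}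
  have hG := aux_squarefree (L := AlgebraicClosure K) F hsf
  have hdeg := aux_totalDegree_map (algebraMap K (AlgebraicClosure K)) F
  obtain ⟨A, ⟨B, hAB⟩, h1, h2⟩ := aux_comb _ hG.ne_zero (by rw [hdeg]; exact hd)
    (fun h hi hdv => by
      rw [hdeg]
      exact aux_half F hsf.ne_zero habs h hi hdv) _ _ dvd_rfl rfl (by omega)
  refine ⟨A, B, hAB, ?_, ?_⟩
  · intro g hg hgA hgB
    exact hg.not_isUnit (hG g (hAB ▸ mul_dvd_mul hgA hgB))
  · have hne := hG.ne_zero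
    rw [hAB] at hne
    have hs := congrArg MvPolynomial.totalDegree hAB
    rw [MvPolynomial.totalDegree_mul_of_isDomain (left_ne_zero_of_mul hne)
      (right_ne_zero_of_mul hne)] at hs
    rw [hdeg] at hs h1 h2
    rw [hs] at h1 h2 ⊢
    generalize A.totalDegree = a at *
    generalize B.totalDegree = b at *
    have h3 : b ≤ 2 * a := by omega
    have h4 : a ≤ 2 * b := by omega
    zify at *
    nlinarith [mul_nonneg (sub_nonneg.2 h3) (sub_nonneg.2 h4)]
end
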